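/- Let a > b > 0 and α > β > 0 be real numbers. Suppose (P, Q, Z) ∈ ℝ³ satisfies P = 0 together with the equations P − tanh(αQ + α(a−b)(P + tanh(βQ))) + tanh(βQ) = 0 and Z − α^{−1}·log(2·cosh(αQ + α(a−b)(P + tanh(βQ)))) + β^{−1}·log(2·cosh(βQ)) + (1/2)(a−b)(P + tanh(βQ))² = 0. Then Q = 0 and Z = (log 2)·(α^{−1} − β^{−1}); in particular Z < 0. (Equivalently: the only real solution Q of α(a−b)·tanh(βQ) = (β−α)·Q is Q = 0.) -/

import Mathlib

/-!
On a chord, injectivity of `tanh` turns the first equation into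
`(a - b) tanh (β Q) = (α⁻¹ - β⁻¹) (β Q)`. The quotient `tanh x / x` takes values in `(0, 1)`, so the
line of slope `α⁻¹ - β⁻¹` meets the graph of `(a - b) tanh` only at the origin as soon as this slope
is negative and at most the slope `a - b` of the graph there. At `Q = 0` the second equation reads
`Z = (α⁻¹ - β⁻¹) log 2`.
-/

theorem strictMonoOn_mul_cosh_sub_sinh :
    StrictMonoOn (fun x : ℝ ↦ x * Real.cosh x - Real.sinh x) (Set.Ici 0) := by
  refine strictMonoOn_of_deriv_pos (convex_Ici 0) (by fun_prop) fun x hx ↦ ?_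
  rw [interior_Ici, Set.mem_Ioi] at hx
  have hderiv : HasDerivAt (fun x : ℝ ↦ x * Real.cosh x - Real.sinh x) (x * Real.sinh x) x := by
    convert! ((hasDerivAt_id x).mul (Real.hasDerivAt_cosh x)).sub (Real.hasDerivAt_sinh x) using 1
    simp
  rw [hderiv.deriv]
  exact mul_pos hx (Real.sinh_pos_iff.mpr hx)

theorem tanh_pos_of_pos {x : ℝ} (hx : 0 < x) : 0 < Real.tanh x := by
  rw [Real.tanh_eq_sinh_div_cosh]
  exact div_pos (Real.sinh_pos_iff.mpr hx) (Real.cosh_pos x)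

theorem tanh_lt_self_of_pos {x : ℝ} (hx : 0 < x) : Real.tanh x < x := by
  have h : 0 < x * Real.cosh x - Real.sinh x := by
    simpa using strictMonoOn_mul_cosh_sub_sinh Set.self_mem_Ici hx.le hx
  rw [Real.tanh_eq_sinh_div_cosh, div_lt_iff₀ (Real.cosh_pos x)]
  exact sub_pos.mp h

theorem mul_tanh_mem_Ioo {x : ℝ} (hx : x ≠ 0) : x * Real.tanh x ∈ Set.Ioo 0 (x ^ 2) := by
  have of_pos {y : ℝ} (hy : 0 < y) : y * Real.tanh y ∈ Set.Ioo 0 (y ^ 2) :=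
    ⟨mul_pos hy (tanh_pos_of_pos hy), by
      rw [sq]; exact mul_lt_mul_of_pos_left (tanh_lt_self_of_pos hy) hy⟩
  rcases hx.lt_or_gt with hneg | hpos
  · simpa using of_pos (neg_pos.mpr hneg)
  · exact of_pos hpos

theorem eq_zero_of_mul_tanh_eq_mul {c d x : ℝ} (hd : d < 0) (hdc : d ≤ c)
    (h : c * Real.tanh x = d * x) : x = 0 := by
  by_contra hx
  obtain ⟨hpos, hlt⟩ := mul_tanh_mem_Ioo hx
  refine lt_irrefl (d * x ^ 2) ?_
  calc d * x ^ 2 < d * (x * Real.tanh x) := mul_lt_mul_of_neg_left hlt hd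
    _ ≤ c * (x * Real.tanh x) := mul_le_mul_of_nonneg_right hdc hpos.le
    _ = x * (c * Real.tanh x) := by ring
    _ = d * x ^ 2 := by rw [h]; ring

theorem chord_equation_iff_slope_equation {a b α β Q : ℝ} (hα : α ≠ 0) (hβ : β ≠ 0) :
    α * (a - b) * Real.tanh (β * Q) = (β - α) * Q ↔
      (a - b) * Real.tanh (β * Q) = (α⁻¹ - β⁻¹) * (β * Q) := by
  have hslope : (β - α) * Q = α * ((α⁻¹ - β⁻¹) * (β * Q)) := by field_simp
  rw [hslope, mul_assoc, mul_right_inj' hα]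

theorem eq_zero_of_chord_equation {a b α β Q : ℝ} (hα : α ≠ 0) (hβ : β ≠ 0)
    (hαβ : α⁻¹ < β⁻¹) (hab : α⁻¹ - β⁻¹ ≤ a - b)
    (h : α * (a - b) * Real.tanh (β * Q) = (β - α) * Q) : Q = 0 := by
  have hslope := (chord_equation_iff_slope_equation hα hβ).mp h
  have hβQ : β * Q = 0 := eq_zero_of_mul_tanh_eq_mul (sub_neg.mpr hαβ) hab hslope
  exact (mul_eq_zero.mp hβQ).resolve_left hβ

theorem tanh_perturbed_field_eq_iff {a b α β Q : ℝ} :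
    Real.tanh (α * Q + α * (a - b) * Real.tanh (β * Q)) = Real.tanh (β * Q) ↔
      α * (a - b) * Real.tanh (β * Q) = (β - α) * Q := by
  rw [Real.tanh_injective.eq_iff, sub_mul, eq_sub_iff_add_eq']

theorem unique_reeb_chord_general (a b α β : ℝ) (hα : α ≠ 0) (hβ : β ≠ 0)
    (hαβ : α⁻¹ < β⁻¹) (hab : α⁻¹ - β⁻¹ ≤ a - b) (P Q Z : ℝ) (hP : P = 0)
    (h1 : P - Real.tanh (α * Q + α * (a - b) * (P + Real.tanh (β * Q)))
        + Real.tanh (β * Q) = 0)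
    (h2 : Z - α⁻¹ * Real.log (2 * Real.cosh (α * Q + α * (a - b) * (P + Real.tanh (β * Q))))
        + β⁻¹ * Real.log (2 * Real.cosh (β * Q))
        + (1 / 2) * (a - b) * (P + Real.tanh (β * Q)) ^ 2 = 0) :
    Q = 0 ∧ Z = Real.log 2 * (α⁻¹ - β⁻¹) ∧ Z < 0 ∧
    (∀ Q' : ℝ, α * (a - b) * Real.tanh (β * Q') = (β - α) * Q' → Q' = 0) := by
  have hunique (Q' : ℝ) : α * (a - b) * Real.tanh (β * Q') = (β - α) * Q' → Q' = 0 :=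
    eq_zero_of_chord_equation hα hβ hαβ hab
  subst hP
  simp only [zero_add] at h1 h2
  have hQ : Q = 0 := hunique Q (tanh_perturbed_field_eq_iff.mp (by linarith))
  subst hQ
  have hZ : Z = Real.log 2 * (α⁻¹ - β⁻¹) := by
    simp only [mul_zero, Real.tanh_zero, add_zero, Real.cosh_zero, mul_one] at h2
    linarith
  have hZneg : Z < 0 :=
    hZ ▸ mul_neg_of_pos_of_neg (Real.log_pos one_lt_two) (sub_neg.mpr hαβ)
  exact ⟨rfl, hZ, hZneg, hunique⟩

/-- Uniqueness of the Reeb chord from `Λ_{a,α}` to `Λ_{b,β}` for `a > b > 0`,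
`α > β > 0`: a point `(P,Q,Z)` of the Legendrian `Λ_{a,α}` with `P = 0`
necessarily has `Q = 0` and `Z = log 2 · (α⁻¹ - β⁻¹) < 0`; equivalently, the
only real solution of `α(a-b) tanh (βQ) = (β-α) Q` is `Q = 0`. -/
theorem unique_reeb_chord (a b α β : ℝ) (hab : b < a) (hb : 0 < b)
    (hαβ : β < α) (hβ : 0 < β) (P Q Z : ℝ) (hP : P = 0)
    (h1 : P - Real.tanh (α * Q + α * (a - b) * (P + Real.tanh (β * Q)))
        + Real.tanh (β * Q) = 0)
    (h2 : Z - α⁻¹ * Real.log (2 * Real.cosh (α * Q + α * (a - b) * (P + Real.tanh (β * Q))))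
        + β⁻¹ * Real.log (2 * Real.cosh (β * Q))
        + (1 / 2) * (a - b) * (P + Real.tanh (β * Q)) ^ 2 = 0) :
    Q = 0 ∧ Z = Real.log 2 * (α⁻¹ - β⁻¹) ∧ Z < 0 ∧
    (∀ Q' : ℝ, α * (a - b) * Real.tanh (β * Q') = (β - α) * Q' → Q' = 0) := by
  have hinv : α⁻¹ < β⁻¹ := inv_strictAnti₀ hβ hαβ
  exact unique_reeb_chord_general a b α β (hβ.trans hαβ).ne' hβ.ne' hinv (by linarith)
    P Q Z hP h1 h2
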